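/- On M = 𝕋^d × ℝ^d with ω = Σ dθ_j ∧ da_j, every symplectic vector field X on M decomposes uniquely as X = X_A + X₂, where X_A is the Hamiltonian vector field of a smooth function A with zero fiberwise average (∫_{𝕋^d} A(θ,a) dθ = 0 for every a), and X₂ is a symplectic vector field whose pushforward under π : M → ℝ^d is a well-defined vector field on ℝ^d (i.e. dπ(X₂) at points of a common fiber agree). Moreover X₂ equals the fiberwise angle-average of X. -/

import Mathlib

open MeasureTheory

/-- The standard symplectic form `ω = Σ dθ_j ∧ da_j` on `M = 𝕋^d × ℝ^d`. -/
def stdSymp (d : ℕ) (v w : (Fin d → ℝ) × (Fin d → ℝ)) : ℝ :=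
  ∑ j, (v.1 j * w.2 j - w.1 j * v.2 j)

/-- The properties required of the two pieces `(A, X₂)` of the decomposition of a symplectic
vector field `X` on `M = 𝕋^d × ℝ^d`: `A` is a smooth zero-fiberwise-average Hamiltonian with
`ω(X - X₂, ·) = -dA` (i.e. `X - X₂ = X_A`), and `X₂` is a smooth symplectic vector field whose
pushforward under `π(θ,a) = a` is well defined. -/
def IsDecomposition (d : ℕ)
    (X : ((Fin d → ℝ) × (Fin d → ℝ)) → ((Fin d → ℝ) × (Fin d → ℝ)))
    (A : ((Fin d → ℝ) × (Fin d → ℝ)) → ℝ)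
    (X₂ : ((Fin d → ℝ) × (Fin d → ℝ)) → ((Fin d → ℝ) × (Fin d → ℝ))) : Prop :=
  ContDiff ℝ (⊤ : ℕ∞) A ∧
  (∀ (θ a : Fin d → ℝ) (n : Fin d → ℤ), A (θ + (fun i => (n i : ℝ)), a) = A (θ, a)) ∧
  (∀ p : (Fin d → ℝ) × (Fin d → ℝ),
    (∫ t in Set.Icc (0 : Fin d → ℝ) 1, A (p.1 + t, p.2)) = 0) ∧
  ContDiff ℝ (⊤ : ℕ∞) X₂ ∧
  (∀ (θ a : Fin d → ℝ) (n : Fin d → ℤ), X₂ (θ + (fun i => (n i : ℝ)), a) = X₂ (θ, a)) ∧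
  (∀ (p : (Fin d → ℝ) × (Fin d → ℝ)) (v w : (Fin d → ℝ) × (Fin d → ℝ)),
    fderiv ℝ (fun q => stdSymp d (X₂ q) w) p v = fderiv ℝ (fun q => stdSymp d (X₂ q) v) p w) ∧
  (∀ θ θ' a : Fin d → ℝ, (X₂ (θ, a)).2 = (X₂ (θ', a)).2) ∧
  (∀ (p : (Fin d → ℝ) × (Fin d → ℝ)) (v : (Fin d → ℝ) × (Fin d → ℝ)),
    stdSymp d (X p - X₂ p) v = - fderiv ℝ A p v)

/-!
The covector fields `ω(X, ·)` of symplectic vector fields are the closed one-forms on the cover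
`ℝ^d × ℝ^d` that are periodic in the angles.

Existence: let `α` be such a form and `⟨α⟩` its fiberwise average, which is again closed. The form
`α - ⟨α⟩` is closed, hence exact on the cover, and its average vanishes, so the average of a
primitive is a constant, which may be taken to be `0`. A primitive with average `0` is unique, so
it agrees with its integer translates and descends to the torus.

Uniqueness: since `X₂` projects to the base, the angle components of `ω(X₂, ·)` are constant on
fibers. Closedness makes the other components affine in the angles, and periodicity makes them
constant, so `X₂ = ⟨X₂⟩`. Averaging `ω(X - X₂, ·) = -dA` gives `ω(⟨X⟩ - X₂, ·) = -d⟨A⟩ = 0`.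
-/

section ParametricIntegral

variable {E Y F : Type*} [NormedAddCommGroup E] [NormedSpace ℝ E] [LocallyCompactSpace E]
  [TopologicalSpace Y] [T2Space Y] [MeasurableSpace Y] [BorelSpace Y]
  [NormedAddCommGroup F] [NormedSpace ℝ F]
  {μ : Measure Y} [IsFiniteMeasureOnCompacts μ]

theorem hasFDerivAt_setIntegral_of_continuous {f : E → Y → F} {f' : E → Y → E →L[ℝ] F} {s : Set Y}
    (hs : IsCompact s) (hf : ∀ x, Continuous (f x)) (hf' : Continuous f'.uncurry)
    (hderiv : ∀ x y, HasFDerivAt (f · y) (f' x y) x) (x₀ : E) :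
    HasFDerivAt (fun x ↦ ∫ y in s, f x y ∂μ) (∫ y in s, f' x₀ y ∂μ) x₀ := by
  obtain ⟨U, hU, hUx₀⟩ := exists_compact_mem_nhds x₀
  obtain ⟨M, hM⟩ := (hU.prod hs).bddAbove_image hf'.norm.continuousOn
  have integrableOn_f (x : E) : IntegrableOn (f x) s μ :=
    (hf x).continuousOn.integrableOn_compact hs
  have integrableOn_f' : IntegrableOn (f' x₀) s μ :=
    (hf'.comp (Continuous.prodMk_right x₀)).continuousOn.integrableOn_compact hs
  refine hasFDerivAt_integral_of_dominated_of_fderiv_le (bound := fun _ ↦ M) hUx₀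
    (.of_forall fun x ↦ (integrableOn_f x).aestronglyMeasurable) (integrableOn_f x₀)
    integrableOn_f'.aestronglyMeasurable ?_ (continuousOn_const.integrableOn_compact hs)
    (.of_forall fun y x _ ↦ hderiv x y)
  filter_upwards [ae_restrict_mem hs.measurableSet] with y hy x hx
  exact hM ⟨(x, y), ⟨hx, hy⟩, rfl⟩

end ParametricIntegral

open scoped Pointwise in
theorem setIntegral_add_left_of_isAddFundamentalDomain {E F : Type*} [AddCommGroup E]
    [MeasurableSpace E] [MeasurableAdd E] {μ : Measure E} [μ.IsAddLeftInvariant]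
    {L : AddSubgroup E} [Countable L] {D : Set E} (hD : IsAddFundamentalDomain L D μ)
    [NormedAddCommGroup F] [NormedSpace ℝ F] {g : E → F}
    (hg : ∀ c ∈ L, Function.Periodic g c) (θ : E) :
    ∫ t in D, g (θ + t) ∂μ = ∫ t in D, g t ∂μ :=
  calc ∫ t in D, g (θ + t) ∂μ
      = ∫ t in θ +ᵥ D, g t ∂μ :=
        ((measurePreserving_add_left μ θ).setIntegral_image_emb
          (measurableEmbedding_addLeft θ) g D).symm
    _ = ∫ t in D, g t ∂μ :=
        (hD.vadd_of_comm θ).setIntegral_eq hD fun c x ↦ by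
          rw [AddSubgroup.vadd_def, vadd_eq_add, add_comm, hg c c.2 x]

theorem setIntegral_Icc_add_left_of_periodic {ι F : Type*} [Fintype ι] [NormedAddCommGroup F]
    [NormedSpace ℝ F] {g : (ι → ℝ) → F}
    (hg : ∀ n : ι → ℤ, Function.Periodic g fun i ↦ (n i : ℝ)) (θ : ι → ℝ) :
    ∫ t in Set.Icc (0 : ι → ℝ) 1, g (θ + t) = ∫ t in Set.Icc (0 : ι → ℝ) 1, g t := by
  let b : Module.Basis ι ℝ (ι → ℝ) := Pi.basisFun ℝ ι
  let L : AddSubgroup (ι → ℝ) := (Submodule.span ℤ (Set.range b)).toAddSubgroup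
  have : Countable L := inferInstanceAs (Countable (Submodule.span ℤ (Set.range b)))
  have hcube : ZSpan.fundamentalDomain b =ᵐ[volume] Set.Icc (0 : ι → ℝ) 1 := by
    rw [ZSpan.fundamentalDomain_pi_basisFun]
    exact Measure.univ_pi_Ico_ae_eq_Icc
  have periodic_of_mem (c : ι → ℝ) (hc : c ∈ L) : Function.Periodic g c := by
    rw [Submodule.mem_toAddSubgroup, Module.Basis.mem_span_iff_repr_mem] at hc
    choose n hn using hc
    obtain rfl : (fun i ↦ (n i : ℝ)) = c := funext hn
    exact hg n
  rw [← setIntegral_congr_set hcube, ← setIntegral_congr_set hcube]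
  exact setIntegral_add_left_of_isAddFundamentalDomain (ZSpan.isAddFundamentalDomain' b volume)
    periodic_of_mem θ

theorem periodic_fderiv {E F : Type*} [NormedAddCommGroup E] [NormedSpace ℝ E]
    [NormedAddCommGroup F] [NormedSpace ℝ F] {f : E → F} {c : E} (hf : Function.Periodic f c) :
    Function.Periodic (fderiv ℝ f) c := by
  intro x
  rw [← fderiv_comp_add_right, hf.funext]

theorem apply_eq_apply_of_hasFDerivAt_const_of_periodic {E F : Type*} [NormedAddCommGroup E]
    [NormedSpace ℝ E] [NormedAddCommGroup F] [NormedSpace ℝ F] {f : E → F} {L : E →L[ℝ] F}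
    (hf : ∀ x, HasFDerivAt f L x) {S : Set E} (hS : Submodule.span ℝ S = ⊤)
    (hper : ∀ c ∈ S, Function.Periodic f c) (x y : E) : f x = f y := by
  have hderiv (x : E) : HasFDerivAt (fun x ↦ f x - L x) (0 : E →L[ℝ] F) x := by
    simpa using (hf x).fun_sub L.hasFDerivAt
  have sub_const (x y : E) : f x - L x = f y - L y :=
    is_const_of_fderiv_eq_zero (fun x ↦ (hderiv x).differentiableAt)
      (fun x ↦ (hderiv x).fderiv) x y
  have L_eq_zero : L = 0 := by
    refine ContinuousLinearMap.coe_injective (LinearMap.ext_on hS fun c hc ↦ ?_)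
    have := sub_const (0 + c) 0
    rw [hper c hc] at this
    simpa using this
  simpa [L_eq_zero] using sub_const x y

section FiberAverage

universe u v w

variable {ι B F G : Type*}

/-- `f` descends to the torus bundle `(ℝ^ι / ℤ^ι) × B`. -/
def IsFiberPeriodic (f : (ι → ℝ) × B → F) : Prop :=
  ∀ (θ : ι → ℝ) (b : B) (n : ι → ℤ), f (θ + (fun i ↦ (n i : ℝ)), b) = f (θ, b)

/-- `f` is constant on the fibers of the projection `(θ, b) ↦ b`. -/
def IsFiberConstant (f : (ι → ℝ) × B → F) : Prop :=
  ∀ (θ θ' : ι → ℝ) (b : B), f (θ, b) = f (θ', b)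

theorem IsFiberConstant.isFiberPeriodic {f : (ι → ℝ) × B → F} (hf : IsFiberConstant f) :
    IsFiberPeriodic f :=
  fun _ _ _ ↦ hf _ _ _

theorem IsFiberPeriodic.comp_left {f : (ι → ℝ) × B → F} (hf : IsFiberPeriodic f) (g : F → G) :
    IsFiberPeriodic (g ∘ f) :=
  fun θ b n ↦ congrArg g (hf θ b n)

theorem IsFiberPeriodic.sub [Sub F] {f g : (ι → ℝ) × B → F} (hf : IsFiberPeriodic f)
    (hg : IsFiberPeriodic g) : IsFiberPeriodic (f - g) :=
  fun θ b n ↦ congrArg₂ (· - ·) (hf θ b n) (hg θ b n)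

theorem isFiberPeriodic_iff_periodic [AddZeroClass B] {f : (ι → ℝ) × B → F} :
    IsFiberPeriodic f ↔ ∀ n : ι → ℤ, Function.Periodic f (fun i ↦ (n i : ℝ), 0) := by
  simp only [IsFiberPeriodic, Function.Periodic, Prod.forall, Prod.mk_add_mk, add_zero]
  exact ⟨fun h n θ b ↦ h θ b n, fun h θ b n ↦ h n θ b⟩

theorem isFiberConstant_iff_periodic [AddZeroClass B] {f : (ι → ℝ) × B → F} :
    IsFiberConstant f ↔ ∀ s : ι → ℝ, Function.Periodic f (s, 0) := by
  simp only [IsFiberConstant, Function.Periodic, Prod.forall, Prod.mk_add_mk, add_zero]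
  exact ⟨fun h s θ b ↦ h _ _ b, fun h θ θ' b ↦ by simpa using h (θ - θ') θ' b⟩

variable [Fintype ι] [NormedAddCommGroup F]

theorem integrableOn_fiber [TopologicalSpace B] {f : (ι → ℝ) × B → F} (hf : Continuous f)
    (p : (ι → ℝ) × B) :
    IntegrableOn (fun t ↦ f (p.1 + t, p.2)) (Set.Icc (0 : ι → ℝ) 1) :=
  Continuous.integrableOn_Icc (by fun_prop)

variable [NormedSpace ℝ F]

/-- The average `⟨f⟩` of `f` over the unit cube of angle translations. For `f` periodic in the
angles, this is the average over the translations by the torus `ℝ^ι / ℤ^ι`. -/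
noncomputable def fiberAverage (f : (ι → ℝ) × B → F) (p : (ι → ℝ) × B) : F :=
  ∫ t in Set.Icc (0 : ι → ℝ) 1, f (p.1 + t, p.2)

theorem IsFiberConstant.fiberAverage_eq [CompleteSpace F] {f : (ι → ℝ) × B → F}
    (hf : IsFiberConstant f) : fiberAverage f = f := by
  ext p
  simp [fiberAverage, hf (p.1 + _) p.1, Measure.real, Real.volume_Icc_pi]

theorem IsFiberPeriodic.isFiberConstant_fiberAverage {f : (ι → ℝ) × B → F}
    (hf : IsFiberPeriodic f) : IsFiberConstant (fiberAverage f) := by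
  intro θ θ' b
  have hper (n : ι → ℤ) : Function.Periodic (fun t ↦ f (t, b)) fun i ↦ (n i : ℝ) :=
    fun t ↦ hf t b n
  exact (setIntegral_Icc_add_left_of_periodic hper θ).trans
    (setIntegral_Icc_add_left_of_periodic hper θ').symm

theorem fiberAverage_comp_add_right [AddCommSemigroup B] (f : (ι → ℝ) × B → F)
    (s p : (ι → ℝ) × B) : fiberAverage (fun q ↦ f (q + s)) p = fiberAverage f (p + s) := by
  simp only [fiberAverage, Prod.add_def, add_right_comm]

section Topology

variable [TopologicalSpace B] {f g : (ι → ℝ) × B → F}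

theorem fiberAverage_sub (hf : Continuous f) (hg : Continuous g) :
    fiberAverage (f - g) = fiberAverage f - fiberAverage g :=
  funext fun p ↦ integral_sub (integrableOn_fiber hf p) (integrableOn_fiber hg p)

theorem fiberAverage_clm_comp [NormedAddCommGroup G] [NormedSpace ℝ G] [CompleteSpace F]
    [CompleteSpace G] (L : F →L[ℝ] G) (hf : Continuous f) :
    fiberAverage (L ∘ f) = L ∘ fiberAverage f :=
  funext fun p ↦ L.integral_comp_comm (integrableOn_fiber hf p)

theorem continuous_fiberAverage [FirstCountableTopology B] [LocallyCompactSpace B]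
    (hf : Continuous f) : Continuous (fiberAverage f) :=
  continuous_parametric_integral_of_continuous
    (f := fun (p : (ι → ℝ) × B) (t : ι → ℝ) ↦ f (p.1 + t, p.2))
    (by fun_prop) isCompact_Icc

end Topology

variable [NormedAddCommGroup B] [NormedSpace ℝ B] {f g : (ι → ℝ) × B → F}

theorem eq_of_fderiv_eq_of_fiberAverage_eq [CompleteSpace F] (hf : Differentiable ℝ f)
    (hg : Differentiable ℝ g) (hderiv : fderiv ℝ f = fderiv ℝ g)
    (havg : fiberAverage f = fiberAverage g) : f = g := by
  have sub_const (p q : (ι → ℝ) × B) : (f - g) p = (f - g) q :=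
    is_const_of_fderiv_eq_zero (hf.sub hg)
      (fun p ↦ by rw [fderiv_sub (hf p) (hg p), hderiv, sub_self]) p q
  rw [← sub_eq_zero, ← IsFiberConstant.fiberAverage_eq fun _ _ _ ↦ sub_const _ _,
    fiberAverage_sub hf.continuous hg.continuous, havg, sub_self]

variable [LocallyCompactSpace B]

theorem hasFDerivAt_fiberAverage (hf : ContDiff ℝ 1 f) (p : (ι → ℝ) × B) :
    HasFDerivAt (fiberAverage f) (fiberAverage (fderiv ℝ f) p) p := by
  have hf' : Continuous fun x : ((ι → ℝ) × B) × (ι → ℝ) ↦ fderiv ℝ f (x.1.1 + x.2, x.1.2) :=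
    (hf.continuous_fderiv one_ne_zero).comp (by fun_prop)
  have hderiv (q : (ι → ℝ) × B) (t : ι → ℝ) :
      HasFDerivAt (fun q : (ι → ℝ) × B ↦ f (q.1 + t, q.2)) (fderiv ℝ f (q.1 + t, q.2)) q := by
    have := (hasFDerivAt_comp_add_right (t, 0)).2
      (hf.differentiable one_ne_zero (q + (t, 0))).hasFDerivAt
    simpa only [Prod.add_def, add_zero] using this
  exact hasFDerivAt_setIntegral_of_continuous isCompact_Icc (fun q ↦ by fun_prop) hf' hderiv p

theorem fderiv_fiberAverage (hf : ContDiff ℝ 1 f) :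
    fderiv ℝ (fiberAverage f) = fiberAverage (fderiv ℝ f) :=
  funext fun p ↦ (hasFDerivAt_fiberAverage hf p).fderiv

-- The induction replaces `F` by `(ι → ℝ) × B →L[ℝ] F`, which must not raise the universe of `F`.
theorem contDiff_fiberAverage_nat {ι : Type u} {B : Type v} [Fintype ι] [NormedAddCommGroup B]
    [NormedSpace ℝ B] [LocallyCompactSpace B] (n : ℕ) {F : Type (max u v w)}
    [NormedAddCommGroup F] [NormedSpace ℝ F] {f : (ι → ℝ) × B → F} (hf : ContDiff ℝ n f) :
    ContDiff ℝ n (fiberAverage f) := by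
  induction n generalizing F with
  | zero => exact contDiff_zero.2 (continuous_fiberAverage (contDiff_zero.1 hf))
  | succ n ih =>
    have hf₁ : ContDiff ℝ 1 f := hf.of_le (by simp)
    push_cast at hf ⊢
    rw [contDiff_succ_iff_fderiv] at hf ⊢
    refine ⟨fun p ↦ (hasFDerivAt_fiberAverage hf₁ p).differentiableAt, by simp, ?_⟩
    rw [fderiv_fiberAverage hf₁]
    exact ih hf.2.2

theorem contDiff_fiberAverage {ι : Type u} {B : Type v} {F : Type w} [Fintype ι]
    [NormedAddCommGroup B] [NormedSpace ℝ B] [LocallyCompactSpace B] [NormedAddCommGroup F]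
    [NormedSpace ℝ F] {f : (ι → ℝ) × B → F} (hf : ContDiff ℝ (⊤ : ℕ∞) f) :
    ContDiff ℝ (⊤ : ℕ∞) (fiberAverage f) := by
  let lift : F ≃L[ℝ] ULift.{max u v} F := ContinuousLinearEquiv.ulift.symm
  have lift_fiberAverage : fiberAverage (lift ∘ f) = lift ∘ fiberAverage f :=
    funext fun p ↦ lift.integral_comp_comm _
  refine contDiff_infty.2 fun n ↦ ?_
  rw [← lift.comp_contDiff_iff, ← lift_fiberAverage]
  exact contDiff_fiberAverage_nat.{u, v, w} n
    (lift.comp_contDiff_iff.2 (contDiff_infty.1 hf n))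

end FiberAverage

section ClosedOneForm

/-- The one-form `α` on a normed space, with values in `F`, is closed: its exterior derivative
`dα (v, w) = Dα(v) w - Dα(w) v` vanishes. -/
def IsClosedOneForm {E F : Type*} [NormedAddCommGroup E] [NormedSpace ℝ E] [NormedAddCommGroup F]
    [NormedSpace ℝ F] (α : E → E →L[ℝ] F) : Prop :=
  ∀ p v w, fderiv ℝ α p v w = fderiv ℝ α p w v

variable {E F : Type*} [NormedAddCommGroup E] [NormedSpace ℝ E] [NormedAddCommGroup F]
  [NormedSpace ℝ F]

theorem fderiv_eval {α : E → E →L[ℝ] F} (hα : Differentiable ℝ α) (p v w : E) :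
    fderiv ℝ (fun q ↦ α q w) p v = fderiv ℝ α p v w := by
  simp [fderiv_clm_apply (hα p) (differentiableAt_const w)]

theorem isClosedOneForm_iff_fderiv_eval {α : E → E →L[ℝ] F} (hα : Differentiable ℝ α) :
    IsClosedOneForm α ↔
      ∀ p v w, fderiv ℝ (fun q ↦ α q w) p v = fderiv ℝ (fun q ↦ α q v) p w := by
  simp only [IsClosedOneForm, fderiv_eval hα]

theorem IsClosedOneForm.sub {α β : E → E →L[ℝ] F} (hα : IsClosedOneForm α)
    (hβ : IsClosedOneForm β) (hα' : Differentiable ℝ α) (hβ' : Differentiable ℝ β) :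
    IsClosedOneForm (α - β) := by
  intro p v w
  simp only [fderiv_sub (hα' p) (hβ' p), sub_apply, hα p v w, hβ p v w]

variable {ι B : Type*} [Fintype ι] [NormedAddCommGroup B] [NormedSpace ℝ B]
  {α : (ι → ℝ) × B → (ι → ℝ) × B →L[ℝ] F}

/- Along a fiber, closedness turns the angle derivatives of the components of `α` into derivatives
of its angle components, which are constant; so each component is affine in the angles, and
periodicity kills its linear part. -/
theorem IsClosedOneForm.isFiberConstant (hα : IsClosedOneForm α) (hdiff : Differentiable ℝ α)
    (hper : IsFiberPeriodic α) (hangle : ∀ e, IsFiberConstant fun p ↦ α p (e, 0)) :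
    IsFiberConstant α := by
  have fderiv_angle (e x : ι → ℝ) (b : B) :
      fderiv ℝ (fun q ↦ α q (e, 0)) (x, b) = fderiv ℝ (fun q ↦ α q (e, 0)) (0, b) :=
    isFiberConstant_iff_periodic.2
      (fun s ↦ periodic_fderiv (isFiberConstant_iff_periodic.1 (hangle e) s)) x 0 b
  intro θ θ' b
  have hasFDerivAt_fiber (x : ι → ℝ) : HasFDerivAt (fun x ↦ α (x, b))
      ((fderiv ℝ α (0, b)).comp (.inl ℝ (ι → ℝ) B)) x := by
    have fderiv_eq : (fderiv ℝ α (x, b)).comp (.inl ℝ (ι → ℝ) B) =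
        (fderiv ℝ α (0, b)).comp (.inl ℝ (ι → ℝ) B) := by
      refine ContinuousLinearMap.ext fun e ↦ ContinuousLinearMap.ext fun w ↦ ?_
      calc fderiv ℝ α (x, b) (e, 0) w
          = fderiv ℝ (fun q ↦ α q (e, 0)) (x, b) w := by rw [hα, fderiv_eval hdiff]
        _ = fderiv ℝ (fun q ↦ α q (e, 0)) (0, b) w := by rw [fderiv_angle]
        _ = fderiv ℝ α (0, b) (e, 0) w := by rw [hα, fderiv_eval hdiff]
    exact fderiv_eq ▸ (hdiff (x, b)).hasFDerivAt.comp x (hasFDerivAt_prodMk_left x b)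
  classical
  refine apply_eq_apply_of_hasFDerivAt_const_of_periodic hasFDerivAt_fiber
    (Pi.basisFun ℝ ι).span_eq ?_ θ θ'
  rintro _ ⟨i, rfl⟩ x
  have single_eq_cast : Pi.basisFun ℝ ι i = fun j ↦ ((Pi.single i 1 : ι → ℤ) j : ℝ) := by
    ext j
    by_cases h : j = i <;> simp [h]
  rw [single_eq_cast]
  exact hper x b _

variable [LocallyCompactSpace B]

theorem isClosedOneForm_fiberAverage (hα : IsClosedOneForm α) (hsmooth : ContDiff ℝ 1 α) :
    IsClosedOneForm (fiberAverage α) := by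
  have hcont : Continuous (fderiv ℝ α) := hsmooth.continuous_fderiv one_ne_zero
  have eval_fiberAverage (p v w : (ι → ℝ) × B) :
      fiberAverage (fderiv ℝ α) p v w = fiberAverage (fun q ↦ fderiv ℝ α q v w) p := by
    have hint := integrableOn_fiber (f := fderiv ℝ α) hcont p
    have hint_v := integrableOn_fiber (f := fun q ↦ fderiv ℝ α q v) (by fun_prop) p
    exact (DFunLike.congr_fun (ContinuousLinearMap.integral_apply hint v) w).trans
      (ContinuousLinearMap.integral_apply hint_v w)
  intro p v w
  rw [fderiv_fiberAverage hsmooth, eval_fiberAverage, eval_fiberAverage]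
  simp only [hα _ v w]

variable [CompleteSpace F]

theorem IsClosedOneForm.exists_hasFDerivAt (hα : IsClosedOneForm α) (hdiff : Differentiable ℝ α)
    (hper : IsFiberPeriodic α) (havg : fiberAverage α = 0) :
    ∃ A : (ι → ℝ) × B → F, (∀ p, HasFDerivAt A (α p) p) ∧ IsFiberPeriodic A ∧
      fiberAverage A = 0 := by
  obtain ⟨A, hA⟩ : ∃ A : (ι → ℝ) × B → F, ∀ p, HasFDerivAt A (α p) p := by
    simpa using convex_univ.exists_forall_hasFDerivAt_of_fderiv_symmetric isOpen_univ
      hdiff.differentiableOn fun p _ ↦ hα p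
  have hfderiv : fderiv ℝ A = α := funext fun p ↦ (hA p).fderiv
  have hA_diff : Differentiable ℝ A := fun p ↦ (hA p).differentiableAt
  have hA_smooth : ContDiff ℝ 1 A :=
    contDiff_one_iff_fderiv.2 ⟨hA_diff, hfderiv ▸ hdiff.continuous⟩
  have fiberAverage_const (p q : (ι → ℝ) × B) :
      fiberAverage A p = fiberAverage A q :=
    is_const_of_fderiv_eq_zero (fun p ↦ (hasFDerivAt_fiberAverage hA_smooth p).differentiableAt)
      (fun p ↦ by simp [fderiv_fiberAverage hA_smooth, hfderiv, havg]) p q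
  refine ⟨fun p ↦ A p - fiberAverage A 0, fun p ↦ (hA p).sub_const _, ?_, ?_⟩
  · suffices IsFiberPeriodic A from this.comp_left (· - fiberAverage A 0)
    -- An integer translate of `A` has the same derivative and the same average as `A`.
    rw [isFiberPeriodic_iff_periodic] at hper ⊢
    refine fun n ↦ congrFun (eq_of_fderiv_eq_of_fiberAverage_eq
      (hA_diff.comp (differentiable_id.add_const _)) hA_diff ?_ ?_)
    · ext1 p
      exact (fderiv_comp_add_right _).trans (by rw [hfderiv, hper n p])
    · ext1 p
      exact (fiberAverage_comp_add_right A _ p).trans (fiberAverage_const _ _)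
  · have hconst : IsFiberConstant fun _ : (ι → ℝ) × B ↦ fiberAverage A 0 :=
      fun _ _ _ ↦ rfl
    ext1 p
    refine (congrFun (fiberAverage_sub hA_diff.continuous continuous_const) p).trans ?_
    rw [Pi.sub_apply, hconst.fiberAverage_eq, fiberAverage_const p 0, sub_self, Pi.zero_apply]

theorem IsClosedOneForm.exists_hasFDerivAt_sub_fiberAverage (hα : IsClosedOneForm α)
    (hsmooth : ContDiff ℝ 1 α) (hper : IsFiberPeriodic α) :
    ∃ A : (ι → ℝ) × B → F, (∀ p, HasFDerivAt A (α p - fiberAverage α p) p) ∧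
      IsFiberPeriodic A ∧ fiberAverage A = 0 := by
  have hdiff : Differentiable ℝ α := hsmooth.differentiable one_ne_zero
  have havg_diff : Differentiable ℝ (fiberAverage α) :=
    fun p ↦ (hasFDerivAt_fiberAverage hsmooth p).differentiableAt
  have havg_const : IsFiberConstant (fiberAverage α) := hper.isFiberConstant_fiberAverage
  have hclosed : IsClosedOneForm (α - fiberAverage α) :=
    hα.sub (isClosedOneForm_fiberAverage hα hsmooth) hdiff havg_diff
  refine hclosed.exists_hasFDerivAt (hdiff.sub havg_diff)
    (hper.sub havg_const.isFiberPeriodic) ?_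
  rw [fiberAverage_sub hdiff.continuous havg_diff.continuous, havg_const.fiberAverage_eq, sub_self]

end ClosedOneForm

section Symplectic

theorem stdSymp_eq_dotProduct (d : ℕ) (v w : (Fin d → ℝ) × (Fin d → ℝ)) :
    stdSymp d v w = v.1 ⬝ᵥ w.2 - w.1 ⬝ᵥ v.2 :=
  Finset.sum_sub_distrib ..

/-- `stdSymp d` as a continuous bilinear map; `stdSympCLM d v` is the covector `ω(v, ·)`. -/
noncomputable def stdSympCLM (d : ℕ) :
    (Fin d → ℝ) × (Fin d → ℝ) →L[ℝ] (Fin d → ℝ) × (Fin d → ℝ) →L[ℝ] ℝ :=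
  (LinearMap.mk₂ ℝ (stdSymp d)
    (fun _ _ _ ↦ by simp only [stdSymp_eq_dotProduct, Prod.fst_add, Prod.snd_add, add_dotProduct,
      dotProduct_add, add_sub_add_comm])
    (fun _ _ _ ↦ by simp only [stdSymp_eq_dotProduct, Prod.smul_fst, Prod.smul_snd,
      smul_dotProduct, dotProduct_smul, smul_sub])
    (fun _ _ _ ↦ by simp only [stdSymp_eq_dotProduct, Prod.fst_add, Prod.snd_add, add_dotProduct,
      dotProduct_add, add_sub_add_comm])
    (fun _ _ _ ↦ by simp only [stdSymp_eq_dotProduct, Prod.smul_fst, Prod.smul_snd,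
      smul_dotProduct, dotProduct_smul, smul_sub])).toContinuousBilinearMap

theorem stdSympCLM_apply (d : ℕ) (v w : (Fin d → ℝ) × (Fin d → ℝ)) :
    stdSympCLM d v w = stdSymp d v w :=
  rfl

theorem stdSympCLM_injective (d : ℕ) : Function.Injective (stdSympCLM d) := by
  intro v v' h
  have h' (w) : stdSymp d v w = stdSymp d v' w := DFunLike.congr_fun h w
  ext j
  · simpa [stdSymp_eq_dotProduct] using h' (0, Pi.single j 1)
  · simpa [stdSymp_eq_dotProduct] using h' (Pi.single j 1, 0)

variable {d : ℕ} {X X₂ : (Fin d → ℝ) × (Fin d → ℝ) → (Fin d → ℝ) × (Fin d → ℝ)}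
  {A A' : (Fin d → ℝ) × (Fin d → ℝ) → ℝ}

theorem isClosedOneForm_stdSympCLM_comp_iff (hX : Differentiable ℝ X) :
    IsClosedOneForm (stdSympCLM d ∘ X) ↔ ∀ p v w,
      fderiv ℝ (fun q ↦ stdSymp d (X q) w) p v = fderiv ℝ (fun q ↦ stdSymp d (X q) v) p w :=
  isClosedOneForm_iff_fderiv_eval ((stdSympCLM d).differentiable.comp hX)

theorem IsDecomposition.isFiberConstant (h : IsDecomposition d X A X₂) : IsFiberConstant X₂ := by
  obtain ⟨-, -, -, hsmooth, hper, hclosed, hpush, -⟩ := h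
  have hdiff : Differentiable ℝ X₂ := hsmooth.differentiable (by simp)
  have hform : IsFiberConstant (stdSympCLM d ∘ X₂) := by
    refine ((isClosedOneForm_stdSympCLM_comp_iff hdiff).2 hclosed).isFiberConstant
      ((stdSympCLM d).differentiable.comp hdiff) (IsFiberPeriodic.comp_left hper _) ?_
    intro e θ θ' a
    simp only [Function.comp_apply, stdSympCLM_apply, stdSymp_eq_dotProduct, hpush θ θ' a,
      dotProduct_zero]
  exact fun θ θ' a ↦ stdSympCLM_injective d (hform θ θ' a)

theorem IsDecomposition.fderiv_eq (h : IsDecomposition d X A X₂) :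
    fderiv ℝ A = stdSympCLM d ∘ (X₂ - X) := by
  obtain ⟨-, -, -, -, -, -, -, hham⟩ := h
  refine funext fun p ↦ ContinuousLinearMap.ext fun v ↦ ?_
  rw [← neg_eq_iff_eq_neg.2 (hham p v), ← stdSympCLM_apply, Function.comp_apply, Pi.sub_apply,
    ← neg_sub (X p), map_neg, neg_apply]

theorem IsDecomposition.eq_fiberAverage (h : IsDecomposition d X A X₂) (hX : Continuous X) :
    X₂ = fiberAverage X := by
  have hA : ContDiff ℝ 1 A := h.1.of_le (by exact_mod_cast le_top)
  have hA_avg : fiberAverage A = 0 := funext h.2.2.1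
  have hX₂ : Continuous X₂ := h.2.2.2.1.continuous
  have form_eq_zero : stdSympCLM d ∘ (X₂ - fiberAverage X) = 0 :=
    calc stdSympCLM d ∘ (X₂ - fiberAverage X)
        = stdSympCLM d ∘ fiberAverage (X₂ - X) := by
          rw [fiberAverage_sub hX₂ hX, h.isFiberConstant.fiberAverage_eq]
      _ = fiberAverage (fderiv ℝ A) := by
          rw [h.fderiv_eq, fiberAverage_clm_comp _ (hX₂.sub hX)]
      _ = 0 := by
          rw [← fderiv_fiberAverage hA, hA_avg, fderiv_zero]
  ext1 p
  refine sub_eq_zero.1 (stdSympCLM_injective d ?_)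
  rw [map_zero]
  exact congrFun form_eq_zero p

theorem IsDecomposition.hamiltonian_unique (h : IsDecomposition d X A X₂)
    (h' : IsDecomposition d X A' X₂) : A = A' :=
  eq_of_fderiv_eq_of_fiberAverage_eq (h.1.differentiable (by simp))
    (h'.1.differentiable (by simp)) (h.fderiv_eq.trans h'.fderiv_eq.symm)
    ((funext h.2.2.1).trans (funext h'.2.2.1).symm)

theorem exists_isDecomposition_fiberAverage (hsmooth : ContDiff ℝ (⊤ : ℕ∞) X)
    (hper : IsFiberPeriodic X) (hclosed : IsClosedOneForm (stdSympCLM d ∘ X)) :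
    ∃ A, IsDecomposition d X A (fiberAverage X) := by
  have hform : ContDiff ℝ (⊤ : ℕ∞) (stdSympCLM d ∘ X) := (stdSympCLM d).contDiff.comp hsmooth
  have havg_smooth : ContDiff ℝ (⊤ : ℕ∞) (fiberAverage X) := contDiff_fiberAverage hsmooth
  have havg_const : IsFiberConstant (fiberAverage X) := hper.isFiberConstant_fiberAverage
  have havg_form : fiberAverage (stdSympCLM d ∘ X) = stdSympCLM d ∘ fiberAverage X :=
    fiberAverage_clm_comp _ hsmooth.continuous
  have hform₁ : ContDiff ℝ 1 (stdSympCLM d ∘ X) := hform.of_le (by exact_mod_cast le_top)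
  have havg_closed : IsClosedOneForm (stdSympCLM d ∘ fiberAverage X) :=
    havg_form ▸ isClosedOneForm_fiberAverage hclosed hform₁
  obtain ⟨A, hA, hA_per, hA_avg⟩ :=
    hclosed.exists_hasFDerivAt_sub_fiberAverage hform₁ (hper.comp_left _)
  rw [havg_form] at hA
  have hA_smooth : ContDiff ℝ (⊤ : ℕ∞) A := by
    rw [contDiff_infty_iff_fderiv, funext fun p ↦ (hA p).fderiv]
    exact ⟨fun p ↦ (hA p).differentiableAt,
      hform.sub ((stdSympCLM d).contDiff.comp havg_smooth)⟩
  -- The sign convention `ω(X_A, ·) = -dA` makes the Hamiltonian `-A`.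
  refine ⟨-A, hA_smooth.neg, hA_per.comp_left Neg.neg, fun p ↦ ?_, havg_smooth,
    havg_const.isFiberPeriodic, ?_, fun θ θ' a ↦ congrArg Prod.snd (havg_const θ θ' a),
    fun p v ↦ ?_⟩
  · exact (integral_neg _).trans (neg_eq_zero.2 (congrFun hA_avg p))
  · exact (isClosedOneForm_stdSympCLM_comp_iff (havg_smooth.differentiable (by simp))).1 havg_closed
  · rw [(hA p).neg.fderiv, neg_apply, neg_neg, ← stdSympCLM_apply, map_sub]
    rfl

end Symplectic

/-- On `M = 𝕋^d × ℝ^d` with `ω = Σ dθ_j ∧ da_j` (torus modelled by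
ℤ^d-periodicity in the angles), every smooth symplectic vector field `X` decomposes uniquely as
`X = X_A + X₂` with `A` of zero fiberwise average and `X₂` symplectic projecting to a
well-defined vector field on the base; moreover `X₂` is the fiberwise angle-average of `X`. -/
theorem symplectic_vector_field_decomposition
    (d : ℕ)
    (X : ((Fin d → ℝ) × (Fin d → ℝ)) → ((Fin d → ℝ) × (Fin d → ℝ)))
    (hsmooth : ContDiff ℝ (⊤ : ℕ∞) X)
    (hper : ∀ (θ a : Fin d → ℝ) (n : Fin d → ℤ), X (θ + (fun i => (n i : ℝ)), a) = X (θ, a))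
    (hclosed : ∀ (p : (Fin d → ℝ) × (Fin d → ℝ)) (v w : (Fin d → ℝ) × (Fin d → ℝ)),
      fderiv ℝ (fun q => stdSymp d (X q) w) p v = fderiv ℝ (fun q => stdSymp d (X q) v) p w) :
    (∃! P : (((Fin d → ℝ) × (Fin d → ℝ)) → ℝ) ×
        (((Fin d → ℝ) × (Fin d → ℝ)) → ((Fin d → ℝ) × (Fin d → ℝ))),
      IsDecomposition d X P.1 P.2) ∧
    (∀ (A : ((Fin d → ℝ) × (Fin d → ℝ)) → ℝ)
        (X₂ : ((Fin d → ℝ) × (Fin d → ℝ)) → ((Fin d → ℝ) × (Fin d → ℝ))),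
      IsDecomposition d X A X₂ →
      ∀ p : (Fin d → ℝ) × (Fin d → ℝ),
        X₂ p = ∫ t in Set.Icc (0 : Fin d → ℝ) 1, X (p.1 + t, p.2)) := by
  have hclosed' : IsClosedOneForm (stdSympCLM d ∘ X) :=
    (isClosedOneForm_stdSympCLM_comp_iff (hsmooth.differentiable (by simp))).2 hclosed
  have eq_average {A X₂} (h : IsDecomposition d X A X₂) : X₂ = fiberAverage X :=
    h.eq_fiberAverage hsmooth.continuous
  obtain ⟨A, hA⟩ := exists_isDecomposition_fiberAverage hsmooth hper hclosed'
  refine ⟨⟨(A, fiberAverage X), hA, ?_⟩, fun A' X₂ h ↦ congrFun (eq_average h)⟩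
  rintro ⟨A', X₂⟩ h
  obtain rfl : X₂ = fiberAverage X := eq_average h
  exact Prod.ext (h.hamiltonian_unique hA) rfl
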